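/- arXiv:2003.01830 — 2 statements merged into one kernel-verified Lean document; each statement's English description precedes it below -/
import Mathlib

section
/- Let w ∈ K and assume R ≠ {w}. Let s_1 ⊊ s_2 ⊊ … ⊊ s_n = R be the clusters in Σ̊_f^w. Then the vertices of NP(f(x+w)) are exactly Q_0, Q_1, …, Q_n, where Q_n = (deg f, v(c_f)); Q_i = (|s_i|, ε_{s_i}^w − |s_i|·ρ_{s_i}^w) for i = 1,…,n−1; Q_0 = (0, ε_{s_1}^w) if f(w) ≠ 0, and Q_0 = (1, ε_{s_1}^w − ρ_{s_1}^w) if f(w) = 0; and for each i = 1,…,n the edge of NP(f(x+w)) joining Q_{i−1} and Q_i has slope −ρ_{s_i}^w. In particular, the edges of NP(f(x+w)) are in bijective correspondence with the clusters in Σ̊_f^w. -/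
open Polynomial
open scoped Classical

namespace ClusterPicture

variable {K Kbar : Type*} [Field K] [Field Kbar] [Algebra K Kbar]

lemma zero_lt_top' : (0 : WithTop ℚ) < ⊤ := by
  simp

lemma withTop_add_pos {a b : WithTop ℚ} (ha : 0 ≤ a) (hb : 0 < b) : 0 < a + b := by
  rcases eq_or_ne a ⊤ with h | h
  · subst h; rw [top_add]; exact zero_lt_top'
  · lift a to ℚ using h
    rcases eq_or_ne b ⊤ with h' | h'
    · subst h'; rw [add_top]; exact zero_lt_top'
    · lift b to ℚ using h'
      have ha' : (0 : ℚ) ≤ a := by exact_mod_cast ha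
      have hb' : (0 : ℚ) < b := by exact_mod_cast hb
      exact_mod_cast add_pos_of_nonneg_of_pos ha' hb'

/-- The setting of the paper: `K` is a complete discretely valued field, with valuation `v`
normalised so that `v(K^×) = ℤ`, `Kbar` is an algebraic closure of `K`, and `v` is (the unique)
extension of the valuation to a `ℚ ∪ {∞}`-valued valuation on `Kbar`. -/
structure Setup (K Kbar : Type*) [Field K] [Field Kbar] [Algebra K Kbar] : Type _ where
  /-- the valuation on the algebraic closure -/
  v : Kbar → WithTop ℚ
  v_top_iff : ∀ x : Kbar, v x = ⊤ ↔ x = 0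
  v_one : v 1 = 0
  v_neg : ∀ x : Kbar, v (-x) = v x
  v_mul : ∀ x y : Kbar, v (x * y) = v x + v y
  v_add : ∀ x y : Kbar, min (v x) (v y) ≤ v (x + y)
  /-- the valuation is normalised: nonzero elements of `K` have integer valuation -/
  v_base_int : ∀ x : K, x ≠ 0 → ∃ n : ℤ, v (algebraMap K Kbar x) = ((n : ℚ) : WithTop ℚ)
  /-- the valuation is surjective onto `ℤ` on `K^×`: there is a uniformiser -/
  exists_uniformiser : ∃ π : K, v (algebraMap K Kbar π) = ((1 : ℚ) : WithTop ℚ)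
  /-- `Kbar` is an algebraic closure of `K` -/
  algClosed : IsAlgClosed Kbar
  algebraic : Algebra.IsAlgebraic K Kbar
  /-- `K` is complete with respect to the valuation -/
  complete : ∀ a : ℕ → K,
    (∀ q : ℚ, ∃ N : ℕ, ∀ m, N ≤ m → ∀ n, N ≤ n →
      ((q : ℚ) : WithTop ℚ) ≤ v (algebraMap K Kbar (a m - a n))) →
    ∃ b : K, ∀ q : ℚ, ∃ N : ℕ, ∀ n, N ≤ n →
      ((q : ℚ) : WithTop ℚ) ≤ v (algebraMap K Kbar (a n - b))

/-- Valuation of an element of the base field `K`. -/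
def Setup.vK (S : Setup K Kbar) (x : K) : WithTop ℚ := S.v (algebraMap K Kbar x)

/-- The finite set of roots of `f` in the algebraic closure `Kbar`. -/
noncomputable def rootFinset (f : K[X]) : Finset Kbar :=
  (f.map (algebraMap K Kbar)).roots.toFinset

/-- A cluster for `f`: a nonempty subset of the set of roots of `f` cut out by a `v`-adic disc. -/
def IsCluster (S : Setup K Kbar) (f : K[X]) (s : Finset Kbar) : Prop :=
  s.Nonempty ∧ ∃ (z : Kbar) (δ : ℚ),
    s = (rootFinset f).filter fun r => ((δ : ℚ) : WithTop ℚ) ≤ S.v (r - z)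

/-- The depth `d_s = min_{r,r' ∈ s} v (r - r')` of a cluster. -/
noncomputable def depth (S : Setup K Kbar) (s : Finset Kbar) : WithTop ℚ :=
  s.inf fun r => s.inf fun r' => S.v (r - r')

/-- `min_{r ∈ s} v (r - z)`, for `z ∈ Kbar`. -/
noncomputable def dmin (S : Setup K Kbar) (s : Finset Kbar) (z : Kbar) : WithTop ℚ :=
  s.inf fun r => S.v (r - z)

/-- `min_{r ∈ s} v (r - w)`, for `w ∈ K`. -/
noncomputable def dminK (S : Setup K Kbar) (s : Finset Kbar) (w : K) : WithTop ℚ :=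
  dmin S s (algebraMap K Kbar w)

/-- `w ∈ K` is a rational centre of `s` if it maximises `min_{r ∈ s} v (r - w)`.
For a proper cluster `s` with rational centre `w`, the radius `ρ_s` is `dminK S s w`. -/
def IsRationalCentre (S : Setup K Kbar) (s : Finset Kbar) (w : K) : Prop :=
  ∀ w' : K, dminK S s w' ≤ dminK S s w

/-- A rational cluster: a cluster cut out by a disc with centre in `K`. -/
def IsRationalCluster (S : Setup K Kbar) (f : K[X]) (s : Finset Kbar) : Prop :=
  s.Nonempty ∧ ∃ (w : K) (δ : ℚ),
    s = (rootFinset f).filter fun r => ((δ : ℚ) : WithTop ℚ) ≤ S.v (r - algebraMap K Kbar w)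

/-- A cluster centred at `w ∈ K`. -/
def IsClusterCentredAt (S : Setup K Kbar) (f : K[X]) (w : K) (s : Finset Kbar) : Prop :=
  s.Nonempty ∧ ∃ δ : ℚ,
    s = (rootFinset f).filter fun r => ((δ : ℚ) : WithTop ℚ) ≤ S.v (r - algebraMap K Kbar w)

/-- The cluster picture of `f` is almost rational: every proper cluster `s` with
`|s| > |ρ_s|_p` satisfies `d_s = ρ_s`. -/
def AlmostRational (S : Setup K Kbar) (f : K[X]) (p : ℕ) : Prop :=
  ∀ s : Finset Kbar, IsCluster S f s → 1 < s.card →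
    ∀ (w : K) (ρ : ℚ), IsRationalCentre S s w → dminK S s w = ((ρ : ℚ) : WithTop ℚ) →
      padicNorm p ρ < (s.card : ℚ) → depth S s = ((ρ : ℚ) : WithTop ℚ)

/-- The slope of the `j`-th edge of the polygon with vertices `(i_j, c_j)`. -/
def NPslope {s : ℕ} (i : Fin (s + 1) → ℕ) (c : Fin (s + 1) → ℚ) (j : Fin s) : ℚ :=
  (c j.succ - c j.castSucc) / ((i j.succ : ℚ) - (i j.castSucc : ℚ))

/-- `(i_0, c_0), …, (i_s, c_s)` are the vertices of the Newton polygon of `f`: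
the points `(i_j, c_j)` are among the points `(m, v(a_m))`, the first and last vertices lie
above the trailing and leading coefficients, the slopes of consecutive edges strictly
increase, and every point `(m, v(a_m))` lies on or above (the line spanned by) every edge. -/
structure IsNPVertices (S : Setup K Kbar) (f : K[X]) (s : ℕ)
    (i : Fin (s + 1) → ℕ) (c : Fin (s + 1) → ℚ) : Prop where
  mono : StrictMono i
  first : i 0 = f.natTrailingDegree
  last : i (Fin.last s) = f.natDegree
  vert : ∀ j, S.vK (f.coeff (i j)) = ((c j : ℚ) : WithTop ℚ)
  slope_mono : StrictMono (NPslope i c)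
  support : ∀ (j : Fin s) (m : ℕ) (q : ℚ), S.vK (f.coeff m) = ((q : ℚ) : WithTop ℚ) →
    (c j.succ - c j.castSucc) * ((m : ℚ) - (i j.castSucc : ℚ)) ≤
      (q - c j.castSucc) * ((i j.succ : ℚ) - (i j.castSucc : ℚ))

/-- The valuation ring of `Kbar`. -/
def intRing (S : Setup K Kbar) : Subring Kbar where
  carrier := {x : Kbar | (0 : WithTop ℚ) ≤ S.v x}
  zero_mem' := by
    simp only [Set.mem_setOf_eq, (S.v_top_iff 0).mpr rfl]
    exact le_top
  one_mem' := by
    simp only [Set.mem_setOf_eq, S.v_one]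
    exact le_refl _
  add_mem' := by
    intro a b ha hb
    exact le_trans (le_min ha hb) (S.v_add a b)
  mul_mem' := by
    intro a b ha hb
    simp only [Set.mem_setOf_eq, S.v_mul a b]
    exact add_nonneg ha hb
  neg_mem' := by
    intro a ha
    simpa only [Set.mem_setOf_eq, S.v_neg] using ha

lemma mem_intRing {S : Setup K Kbar} {x : Kbar} :
    x ∈ intRing S ↔ (0 : WithTop ℚ) ≤ S.v x := Iff.rfl

/-- The maximal ideal of the valuation ring of `Kbar`. -/
def maxIdeal (S : Setup K Kbar) : Ideal (intRing S) where
  carrier := {x : intRing S | (0 : WithTop ℚ) < S.v (x : Kbar)}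
  zero_mem' := by
    show (0 : WithTop ℚ) < S.v ((0 : intRing S) : Kbar)
    rw [show ((0 : intRing S) : Kbar) = 0 from rfl, (S.v_top_iff 0).mpr rfl]
    exact zero_lt_top'
  add_mem' := by
    intro a b ha hb
    show (0 : WithTop ℚ) < S.v ((a : Kbar) + (b : Kbar))
    exact lt_of_lt_of_le (lt_min ha hb) (S.v_add _ _)
  smul_mem' := by
    intro c x hx
    show (0 : WithTop ℚ) < S.v ((c : Kbar) * (x : Kbar))
    rw [S.v_mul]
    exact withTop_add_pos c.2 hx

/-- The residue field of `Kbar`; it is an algebraic closure of the residue field `k` of `K`. -/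
abbrev Residue (S : Setup K Kbar) : Type _ := intRing S ⧸ maxIdeal S

/-- Reduction to the residue field (with junk value `0` on non-integral elements). -/
noncomputable def red (S : Setup K Kbar) (x : Kbar) : Residue S :=
  if h : (0 : WithTop ℚ) ≤ S.v x then Ideal.Quotient.mk (maxIdeal S) ⟨x, mem_intRing.mpr h⟩
  else 0

/-- The reduction `f̄|_L` of `f` along the edge `L` of its Newton polygon with endpoints
`(i₁, q₁)` and `(i₂, q₂)`, of slope `ρ = nρ / n` where `n` is the denominator of `ρ`;
`π` is a uniformiser of `K`.  This is the reduction of `π^{-q₁}·(f|_L)(π^{-nρ}·x)`, where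
`f|_L (x) = ∑_j a_{n j + i₁} x^j`. -/
noncomputable def redEdge (S : Setup K Kbar) (π : K) (f : K[X])
    (i₁ i₂ : ℕ) (q₁ nρ : ℤ) (n : ℕ) : Polynomial (Residue S) :=
  ∑ j ∈ Finset.range ((i₂ - i₁) / n + 1),
    Polynomial.C (red S (algebraMap K Kbar (f.coeff (n * j + i₁)) *
      (algebraMap K Kbar π) ^ (-(q₁ + (j : ℤ) * nρ)))) * Polynomial.X ^ j

/-- `f` is NP-regular (`Δ_v`-regular in dimension 1): for every edge `L` of its Newton
polygon, the reduction `f̄|_L` has no multiple roots in the algebraic closure of the residue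
field, i.e. is separable. -/
def NPRegular (S : Setup K Kbar) (π : K) (f : K[X]) : Prop :=
  ∀ (s : ℕ) (i : Fin (s + 1) → ℕ) (c : Fin (s + 1) → ℚ),
    IsNPVertices S f s i c →
    ∀ (j : Fin s) (q₁ nρ : ℤ) (n : ℕ),
      (q₁ : ℚ) = c j.castSucc →
      n = (NPslope i c j).den →
      (nρ : ℚ) = (n : ℚ) * NPslope i c j →
      (redEdge S π f (i j.castSucc) (i j.succ) q₁ nρ n).Separable

/-- The vertex-index function of the Newton polygon of `f(x+w)`, in terms of the sizes of
the clusters `s_1 ⊂ … ⊂ s_{n+1}` centred at `w`; here `t` is the prescribed first index. -/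
def vertIdx {n : ℕ} (t : ℕ) (s : Fin (n + 1) → Finset Kbar) : Fin (n + 2) → ℕ :=
  fun j => Fin.cases (motive := fun _ => ℕ) t (fun j' => (s j').card) j

/-- The vertex-value function of the Newton polygon of `f(x+w)`: the vertex over `|s_j|` has
second coordinate `ε_{s_j} - |s_j|·ρ_{s_j}`; `c0` is the prescribed value at the first vertex. -/
def vertVal {n : ℕ} (c0 : ℚ) (s : Fin (n + 1) → Finset Kbar) (ρ ε : Fin (n + 1) → ℚ) :
    Fin (n + 2) → ℚ :=
  fun j => Fin.cases (motive := fun _ => ℚ) c0 (fun j' => ε j' - ((s j').card : ℚ) * ρ j') j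

/-!
For a radius `ρ`, the function `∑ aₘ xᵐ ↦ min (v(aₘ) + m • ρ)` is multiplicative (it is the Gauss
valuation of radius `ρ`), and the first and last index attaining the minimum are additive in the
polynomial: the edge of slope `-ρ` of the Newton polygon of a product is the Minkowski sum of the
edges of slope `-ρ` of the factors. Computing these for linear factors, the edge of slope `-ρ` of
`f(x + w) = c ∏ (x - (r - w))` runs from the number of roots with `v(r - w) > ρ` to the number of
roots with `v(r - w) ≥ ρ`. It is nondegenerate exactly when `ρ` is one of the finite values of
`v(r - w)`. These values are the radii of the clusters in `Σ̊_f^w`, and for the radius of a cluster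
the two counts are the size of the preceding cluster (or the multiplicity of `w` as a root, for the
smallest cluster) and the size of the cluster itself.
-/

section Edge

variable {R Γ₀ : Type*}

lemma exists_map_le_map_sum {ι : Type*} [Ring R] [LinearOrderedAddCommMonoidWithTop Γ₀]
    (v : AddValuation R Γ₀) {s : Finset ι} (hs : s.Nonempty) (x : ι → R) :
    ∃ i ∈ s, v (x i) ≤ v (∑ j ∈ s, x j) := by
  obtain ⟨i, hi, hmin⟩ := s.exists_min_image (fun i => v (x i)) hs
  exact ⟨i, hi, v.map_le_sum hmin⟩

variable [LinearOrderedAddCommGroupWithTop Γ₀]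

lemma add_lt_add_of_lt_of_le_of_ne_top {a b c d : Γ₀} (hc : c ≠ ⊤) (hab : a < b) (hcd : c ≤ d) :
    a + c < b + d :=
  ((add_lt_add_iff_left_of_ne_top hc).mpr hab).trans_le (add_le_add_right hcd b)

lemma add_lt_add_of_le_of_lt_of_ne_top {a b c d : Γ₀} (ha : a ≠ ⊤) (hab : a ≤ b) (hcd : c < d) :
    a + c < b + d := by
  simpa only [add_comm] using add_lt_add_of_lt_of_le_of_ne_top ha hcd hab

/-- The Newton polygon of `p` lies above the line `y + m • ρ = e`, of slope `-ρ`, and meets it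
exactly between the abscissae `a` and `b`. The two may coincide: the line then supports the
polygon at a vertex only. -/
structure IsEdge [Ring R] (v : AddValuation R Γ₀) (ρ : Γ₀) (p : R[X]) (e : Γ₀) (a b : ℕ) :
    Prop where
  ne_top : e ≠ ⊤
  le : ∀ m, e ≤ v (p.coeff m) + m • ρ
  lt_of_lt : ∀ m < a, e < v (p.coeff m) + m • ρ
  lt_of_gt : ∀ m, b < m → e < v (p.coeff m) + m • ρ
  left : v (p.coeff a) + a • ρ = e
  right : v (p.coeff b) + b • ρ = e

section Mul

variable [Ring R] {v : AddValuation R Γ₀} {ρ e e' : Γ₀} {p q : R[X]} {a b a' b' : ℕ}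

lemma map_mul_coeff_add_nsmul (p q : R[X]) (i j : ℕ) :
    v (p.coeff i * q.coeff j) + (i + j) • ρ =
      (v (p.coeff i) + i • ρ) + (v (q.coeff j) + j • ρ) := by
  rw [v.map_mul, add_nsmul, add_add_add_comm]

lemma exists_le_map_coeff_mul_add_nsmul (p q : R[X]) (m : ℕ) :
    ∃ i j, i + j = m ∧ (v (p.coeff i) + i • ρ) + (v (q.coeff j) + j • ρ) ≤
      v ((p * q).coeff m) + m • ρ := by
  have hne : (Finset.HasAntidiagonal.antidiagonal m).Nonempty := ⟨(0, m), by simp⟩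
  obtain ⟨⟨i, j⟩, hij, hle⟩ := exists_map_le_map_sum v hne fun x => p.coeff x.1 * q.coeff x.2
  rw [Finset.HasAntidiagonal.mem_antidiagonal] at hij
  refine ⟨i, j, hij, ?_⟩
  rw [← map_mul_coeff_add_nsmul, hij, coeff_mul]
  exact add_le_add_left hle _

lemma map_coeff_mul_add_nsmul_eq {i j : ℕ} (he : e ≠ ⊤)
    (hij : (v (p.coeff i) + i • ρ) + (v (q.coeff j) + j • ρ) = e)
    (hlt : ∀ k l, k + l = i + j → (k, l) ≠ (i, j) →
      e < (v (p.coeff k) + k • ρ) + (v (q.coeff l) + l • ρ)) :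
    v ((p * q).coeff (i + j)) + (i + j) • ρ = e := by
  have hterm : v (p.coeff i * q.coeff j) + (i + j) • ρ = e := by
    rw [map_mul_coeff_add_nsmul, hij]
  have hne : v (p.coeff i * q.coeff j) ≠ ⊤ :=
    (LinearOrderedAddCommGroupWithTop.add_ne_top.mp (hterm ▸ he)).1
  have hmem : (i, j) ∈ Finset.HasAntidiagonal.antidiagonal (i + j) := by simp
  rw [coeff_mul, ← Finset.add_sum_erase _ _ hmem, v.map_add_eq_of_lt_left, hterm]
  refine v.map_lt_sum hne fun x hx => ?_
  obtain ⟨hxne, hx⟩ := Finset.mem_erase.mp hx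
  rw [Finset.HasAntidiagonal.mem_antidiagonal] at hx
  have h := hlt x.1 x.2 hx hxne
  rw [← map_mul_coeff_add_nsmul, hx, ← hterm] at h
  exact lt_of_add_lt_add_right h

namespace IsEdge

theorem of_C {c : R} (hc : v c ≠ ⊤) :
    IsEdge v ρ (C c) (v c) 0 0 where
  ne_top := hc
  le m := by cases m <;> simp [coeff_C]
  lt_of_lt m hm := absurd hm m.not_lt_zero
  lt_of_gt m hm := by simpa [coeff_C, hm.ne'] using hc.lt_top
  left := by simp
  right := by simp

theorem of_X_sub_C (u : R) (hρ : ρ ≠ ⊤) :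
    IsEdge v ρ (X - C u) (min (v u) ρ) (if ρ < v u then 1 else 0)
      (if ρ ≤ v u then 1 else 0) := by
  have h0 : v ((X - C u).coeff 0) + 0 • ρ = v u := by simp
  have h1 : v ((X - C u).coeff 1) + 1 • ρ = ρ := by simp
  have h2 (m : ℕ) : v ((X - C u).coeff (m + 2)) + (m + 2) • ρ = ⊤ := by
    simp [coeff_X]
  have hne : min (v u) ρ ≠ ⊤ := ((min_le_right _ _).trans_lt hρ.lt_top).ne
  refine ⟨hne, ?_, ?_, ?_, ?_, ?_⟩
  · rintro (_ | _ | m)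
    · exact h0 ▸ min_le_left _ _
    · exact (min_le_right _ _).trans_eq h1.symm
    · exact h2 m ▸ le_top
  · rintro m hm
    split_ifs at hm with hu
    · obtain rfl := Nat.lt_one_iff.mp hm
      simpa [h0] using hu
    · exact absurd hm m.not_lt_zero
  · rintro (_ | _ | m) hm
    · exact absurd hm (Nat.not_lt_zero _)
    · rw [h1]
      split_ifs at hm with hu
      · exact absurd hm (lt_irrefl _)
      · exact min_lt_of_left_lt (not_le.mp hu)
    · exact h2 m ▸ hne.lt_top
  · split_ifs with hu
    · rw [h1, min_eq_right hu.le]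
    · rw [h0, min_eq_left (not_lt.mp hu)]
  · split_ifs with hu
    · rw [h1, min_eq_right hu]
    · rw [h0, min_eq_left (not_le.mp hu).le]

theorem mul (hp : IsEdge v ρ p e a b) (hq : IsEdge v ρ q e' a' b') :
    IsEdge v ρ (p * q) (e + e') (a + a') (b + b') := by
  have hne : e + e' ≠ ⊤ :=
    LinearOrderedAddCommGroupWithTop.add_ne_top.mpr ⟨hp.ne_top, hq.ne_top⟩
  have lt_of_left {k l : ℕ} (h : e < v (p.coeff k) + k • ρ) :
      e + e' < (v (p.coeff k) + k • ρ) + (v (q.coeff l) + l • ρ) :=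
    add_lt_add_of_lt_of_le_of_ne_top hq.ne_top h (hq.le l)
  have lt_of_right {k l : ℕ} (h : e' < v (q.coeff l) + l • ρ) :
      e + e' < (v (p.coeff k) + k • ρ) + (v (q.coeff l) + l • ρ) :=
    add_lt_add_of_le_of_lt_of_ne_top hp.ne_top (hp.le k) h
  have lt_left (k l : ℕ) (h : k < a ∨ l < a') :
      e + e' < (v (p.coeff k) + k • ρ) + (v (q.coeff l) + l • ρ) :=
    h.elim (fun h => lt_of_left (hp.lt_of_lt k h)) (fun h => lt_of_right (hq.lt_of_lt l h))
  have lt_right (k l : ℕ) (h : b < k ∨ b' < l) :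
      e + e' < (v (p.coeff k) + k • ρ) + (v (q.coeff l) + l • ρ) :=
    h.elim (fun h => lt_of_left (hp.lt_of_gt k h)) (fun h => lt_of_right (hq.lt_of_gt l h))
  refine ⟨hne, fun m => ?_, fun m hm => ?_, fun m hm => ?_, ?_, ?_⟩
  · obtain ⟨k, l, -, h⟩ := exists_le_map_coeff_mul_add_nsmul (v := v) (ρ := ρ) p q m
    exact (add_le_add (hp.le k) (hq.le l)).trans h
  · obtain ⟨k, l, hkl, h⟩ := exists_le_map_coeff_mul_add_nsmul (v := v) (ρ := ρ) p q m
    exact (lt_left k l (by lia)).trans_le h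
  · obtain ⟨k, l, hkl, h⟩ := exists_le_map_coeff_mul_add_nsmul (v := v) (ρ := ρ) p q m
    exact (lt_right k l (by lia)).trans_le h
  · refine map_coeff_mul_add_nsmul_eq hne (by rw [hp.left, hq.left]) fun k l hkl hne' => ?_
    exact lt_left k l (by grind)
  · refine map_coeff_mul_add_nsmul_eq hne (by rw [hp.right, hq.right]) fun k l hkl hne' => ?_
    exact lt_right k l (by grind)

end IsEdge

end Mul

/-- The Newton polygon of `p` has `n` edges, the `j`-th of which lies on the line
`y + m • ρ j = e j`, of slope `-ρ j`, and joins the vertices of abscissae `i j.castSucc` and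
`i j.succ`. -/
structure IsNewtonPolygon [Ring R] (v : AddValuation R Γ₀) (p : R[X]) {n : ℕ}
    (i : Fin (n + 1) → ℕ) (ρ e : Fin n → Γ₀) : Prop where
  strictMono : StrictMono i
  first : i 0 = p.natTrailingDegree
  last : i (Fin.last n) = p.natDegree
  strictAnti : StrictAnti ρ
  isEdge : ∀ j, IsEdge v (ρ j) p (e j) (i j.castSucc) (i j.succ)

end Edge

section Splits

variable {R Γ₀ : Type*} [LinearOrderedAddCommGroupWithTop Γ₀]

theorem IsEdge.multiset_prod_X_sub_C [CommRing R] {v : AddValuation R Γ₀} {ρ : Γ₀} (hρ : ρ ≠ ⊤)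
    {ι : Type*} (s : Multiset ι) (u : ι → R) :
    IsEdge v ρ (s.map fun i => X - C (u i)).prod (s.map fun i => min (v (u i)) ρ).sum
      (s.countP fun i => ρ < v (u i)) (s.countP fun i => ρ ≤ v (u i)) := by
  induction s using Multiset.induction_on with
  | empty => simpa using IsEdge.of_C (v := v) (ρ := ρ) (c := 1) (by simp)
  | cons i s ih =>
    simp only [Multiset.map_cons, Multiset.prod_cons, Multiset.sum_cons, Multiset.countP_cons]
    rw [add_comm (s.countP _), add_comm (s.countP _)]
    exact (IsEdge.of_X_sub_C (u i) hρ).mul ih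

variable {L : Type*} [Field L] (v : AddValuation L Γ₀) (f : L[X]) (w : L)

/-- The invariant `ε` of the paper, at an arbitrary radius `ρ`. If `f` splits, it is the value of
`f(x + w)` under the Gauss valuation of radius `ρ`, that is, the minimum of `v(aₘ) + m • ρ` over its
coefficients `aₘ`. -/
noncomputable def gaussValue (ρ : Γ₀) : Γ₀ :=
  v f.leadingCoeff + (f.roots.map fun r => min (v (r - w)) ρ).sum

/-- The values `v(r - w)` at the roots `r ≠ w` of `f`. These are the radii of the clusters
of `Σ̊_f^w`. -/
def rootRadii : Set Γ₀ := {x | ∃ r ∈ f.roots, r ≠ w ∧ v (r - w) = x}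

variable {v f w}

lemma comp_X_add_C_eq_prod_roots (hf : f.Splits) :
    f.comp (X + C w) = C f.leadingCoeff * (f.roots.map fun r => X - C (r - w)).prod := by
  conv_lhs => rw [hf.eq_prod_roots]
  rw [mul_comp, C_comp, multiset_prod_comp, Multiset.map_map]
  refine congrArg _ (congrArg _ (Multiset.map_congr rfl fun r _ => ?_))
  simp only [Function.comp_apply, sub_comp, X_comp, C_comp, C_sub]
  ring

theorem isEdge_comp_X_add_C (hf : f.Splits) (hf0 : f ≠ 0) {ρ : Γ₀} (hρ : ρ ≠ ⊤) :
    IsEdge v ρ (f.comp (X + C w)) (gaussValue v f w ρ)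
      (f.roots.countP fun r => ρ < v (r - w)) (f.roots.countP fun r => ρ ≤ v (r - w)) := by
  have hlc : v f.leadingCoeff ≠ ⊤ := v.ne_top_iff.mpr (leadingCoeff_ne_zero.mpr hf0)
  have h := (IsEdge.of_C hlc).mul (IsEdge.multiset_prod_X_sub_C hρ f.roots fun r => r - w)
  rwa [zero_add, zero_add, ← comp_X_add_C_eq_prod_roots hf] at h

lemma countP_lt_countP {α : Type*} {s : Multiset α} {p q : α → Prop} [DecidablePred p]
    [DecidablePred q] (hpq : ∀ a ∈ s, p a → q a) (h : ∃ a ∈ s, q a ∧ ¬ p a) :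
    s.countP p < s.countP q := by
  obtain ⟨a, ha, hqa, hpa⟩ := h
  rw [Multiset.countP_eq_card_filter, Multiset.countP_eq_card_filter]
  refine Multiset.card_lt_card (lt_of_le_of_ne ?_ fun heq => ?_)
  · exact Multiset.le_filter.mpr ⟨Multiset.filter_le _ _, fun b hb =>
      hpq b (Multiset.mem_of_mem_filter hb) (Multiset.of_mem_filter hb)⟩
  · exact hpa (Multiset.of_mem_filter (heq ▸ Multiset.mem_filter.mpr ⟨ha, hqa⟩))

lemma map_sub_mem_rootRadii {r : L} (hr : r ∈ f.roots) (hrw : r ≠ w) :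
    v (r - w) ∈ rootRadii v f w :=
  ⟨r, hr, hrw, rfl⟩

lemma ne_top_of_mem_rootRadii {x : Γ₀} (hx : x ∈ rootRadii v f w) : x ≠ ⊤ := by
  obtain ⟨r, -, hrw, rfl⟩ := hx
  exact v.ne_top_iff.mpr (sub_ne_zero.mpr hrw)

section Radii

variable {n : ℕ} {ρ : Fin (n + 1) → Γ₀} (hanti : StrictAnti ρ)
  (hρ : Set.range ρ = rootRadii v f w)

include hρ

lemma radius_mem (j : Fin (n + 1)) : ρ j ∈ rootRadii v f w := hρ ▸ Set.mem_range_self j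

lemma exists_radius_eq {r : L} (hr : r ∈ f.roots) (hrw : r ≠ w) : ∃ j, ρ j = v (r - w) := by
  rw [← Set.mem_range, hρ]
  exact map_sub_mem_rootRadii hr hrw

include hanti

lemma radius_zero_lt_iff {r : L} (hr : r ∈ f.roots) : ρ 0 < v (r - w) ↔ w = r := by
  refine ⟨fun h => ?_, ?_⟩
  · by_contra hrw
    obtain ⟨j, hj⟩ := exists_radius_eq hρ hr (Ne.symm hrw)
    exact (hanti.lt_iff_gt.mp (hj ▸ h)).not_ge (Fin.zero_le j)
  · rintro rfl
    simpa using (ne_top_of_mem_rootRadii (radius_mem hρ 0)).lt_top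

lemma radius_last_le {r : L} (hr : r ∈ f.roots) : ρ (Fin.last n) ≤ v (r - w) := by
  obtain rfl | hrw := eq_or_ne r w
  · simp
  · obtain ⟨j, hj⟩ := exists_radius_eq hρ hr hrw
    exact hj ▸ hanti.antitone (Fin.le_last j)

theorem countP_radius_zero_lt :
    f.roots.countP (fun r => ρ 0 < v (r - w)) = f.rootMultiplicity w := by
  rw [← count_roots, Multiset.count]
  exact Multiset.countP_congr rfl fun r hr => propext (radius_zero_lt_iff hanti hρ hr)

theorem countP_radius_last_le (hf : f.Splits) :
    f.roots.countP (fun r => ρ (Fin.last n) ≤ v (r - w)) = f.natDegree := by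
  rw [hf.natDegree_eq_card_roots, Multiset.countP_eq_card]
  exact fun r => radius_last_le hanti hρ

lemma radius_succ_lt_iff {j k : Fin (n + 1)} (hjk : k.val = j.val + 1) {r : L} (hr : r ∈ f.roots) :
    ρ k < v (r - w) ↔ ρ j ≤ v (r - w) := by
  obtain rfl | hrw := eq_or_ne r w
  · simpa using (ne_top_of_mem_rootRadii (radius_mem hρ k)).lt_top
  · obtain ⟨l, hl⟩ := exists_radius_eq hρ hr hrw
    rw [← hl, hanti.lt_iff_gt, hanti.le_iff_ge]
    lia

theorem countP_radius_lt (j : Fin (n + 1)) :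
    f.roots.countP (fun r => ρ j < v (r - w)) =
      (Fin.cons (f.rootMultiplicity w) fun j => f.roots.countP fun r => ρ j ≤ v (r - w) :
        Fin (n + 2) → ℕ) j.castSucc := by
  induction j using Fin.cases with
  | zero => exact countP_radius_zero_lt hanti hρ
  | succ j =>
    exact Multiset.countP_congr rfl fun r hr => propext (radius_succ_lt_iff hanti hρ rfl hr)

theorem isNewtonPolygon_of_radii (hf : f.Splits) :
    IsNewtonPolygon v (f.comp (X + C w))
      (Fin.cons (f.rootMultiplicity w) fun j => f.roots.countP fun r => ρ j ≤ v (r - w))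
      ρ fun j => gaussValue v f w (ρ j) where
  strictMono := by
    refine Fin.strictMono_iff_lt_succ.mpr fun j => ?_
    obtain ⟨r, hr, -, hj⟩ := radius_mem hρ j
    rw [← countP_radius_lt hanti hρ, Fin.cons_succ]
    exact countP_lt_countP (fun _ _ => le_of_lt) ⟨r, hr, hj.ge, hj.not_gt⟩
  first := rootMultiplicity_eq_natTrailingDegree
  last := by
    rw [natDegree_comp, natDegree_X_add_C, mul_one]
    exact countP_radius_last_le hanti hρ hf
  strictAnti := hanti
  isEdge j := by
    obtain ⟨r, hr, -⟩ := radius_mem hρ j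
    rw [← countP_radius_lt hanti hρ, Fin.cons_succ]
    exact isEdge_comp_X_add_C hf (ne_zero_of_mem_roots hr)
      (ne_top_of_mem_rootRadii (radius_mem hρ j))

end Radii

section Cluster

variable {s : Multiset L}

variable (v f w) in
/-- The roots of `f`, with multiplicity, in the disc of radius `δ` and centre `w`. -/
noncomputable def rootsInDisc (δ : Γ₀) : Multiset L :=
  f.roots.filter fun r => δ ≤ v (r - w)

variable (v f w) in
/-- The elements of `Σ̊_f^w`, as multisets of roots. A disc of radius `⊤` is allowed: it contains
no root other than `w`. -/
def IsCentredCluster (s : Multiset L) : Prop :=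
  (∃ r ∈ s, r ≠ w) ∧ ∃ δ, s = rootsInDisc v f w δ

variable (v w) in
/-- The invariant `ρ_s^w` of the paper, the least value `v(r - w)` for `r` in `s`,
and `⊤` if `s` is empty. -/
noncomputable def radius (s : Multiset L) : Γ₀ := (s.map fun r => v (r - w)).inf

lemma mem_rootsInDisc {δ : Γ₀} {r : L} :
    r ∈ rootsInDisc v f w δ ↔ r ∈ f.roots ∧ δ ≤ v (r - w) :=
  Multiset.mem_filter

lemma rootsInDisc_antitone : Antitone (rootsInDisc v f w) := fun _ _ h =>
  Multiset.monotone_filter_right _ fun _ => h.trans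

lemma radius_le {r : L} (hr : r ∈ s) : radius v w s ≤ v (r - w) :=
  Multiset.inf_le (Multiset.mem_map_of_mem _ hr)

lemma le_radius_iff {x : Γ₀} : x ≤ radius v w s ↔ ∀ r ∈ s, x ≤ v (r - w) := by
  simp [radius, Multiset.le_inf]

lemma exists_map_sub_eq_radius {r : L} (hr : r ∈ s) : ∃ r' ∈ s, v (r' - w) = radius v w s := by
  obtain ⟨r', hr', hmin⟩ := s.toFinset.exists_min_image (fun r => v (r - w))
    ⟨r, Multiset.mem_toFinset.mpr hr⟩
  simp only [Multiset.mem_toFinset] at hr' hmin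
  exact ⟨r', hr', (le_radius_iff.mpr hmin).antisymm (radius_le hr')⟩

lemma isCentredCluster_rootsInDisc {x : Γ₀} (hx : x ∈ rootRadii v f w) :
    IsCentredCluster v f w (rootsInDisc v f w x) := by
  obtain ⟨r, hr, hrw, rfl⟩ := hx
  exact ⟨⟨r, mem_rootsInDisc.mpr ⟨hr, le_rfl⟩, hrw⟩, _, rfl⟩

lemma radius_rootsInDisc {x : Γ₀} (hx : x ∈ rootRadii v f w) :
    radius v w (rootsInDisc v f w x) = x := by
  refine le_antisymm ?_ (le_radius_iff.mpr fun r hr => (mem_rootsInDisc.mp hr).2)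
  obtain ⟨r, hr, -, rfl⟩ := hx
  exact radius_le (mem_rootsInDisc.mpr ⟨hr, le_rfl⟩)

namespace IsCentredCluster

theorem rootsInDisc_radius (hs : IsCentredCluster v f w s) :
    rootsInDisc v f w (radius v w s) = s := by
  obtain ⟨-, δ, rfl⟩ := hs
  refine le_antisymm (rootsInDisc_antitone ?_) (Multiset.le_filter.mpr ⟨?_, fun r => radius_le⟩)
  · exact le_radius_iff.mpr fun r hr => (mem_rootsInDisc.mp hr).2
  · exact Multiset.filter_le _ _

theorem radius_mem_rootRadii (hs : IsCentredCluster v f w s) :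
    radius v w s ∈ rootRadii v f w := by
  obtain ⟨⟨r, hr, hrw⟩, δ, rfl⟩ := hs
  obtain ⟨r', hr', heq⟩ := exists_map_sub_eq_radius (v := v) (w := w) hr
  refine ⟨r', (mem_rootsInDisc.mp hr').1, ?_, heq⟩
  rintro rfl
  refine v.ne_top_iff.mpr (sub_ne_zero.mpr hrw) (top_le_iff.mp ?_)
  simpa [← heq] using radius_le (v := v) (w := r') hr

end IsCentredCluster

theorem image_radius_setOf_isCentredCluster :
    radius v w '' {s | IsCentredCluster v f w s} = rootRadii v f w := by
  refine Set.Subset.antisymm ?_ fun x hx =>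
    ⟨_, isCentredCluster_rootsInDisc hx, radius_rootsInDisc hx⟩
  rintro _ ⟨s, hs, rfl⟩
  exact hs.radius_mem_rootRadii

theorem strictAntiOn_radius : StrictAntiOn (radius v w) {s | IsCentredCluster v f w s} := by
  intro s hs t ht hst
  refine lt_of_not_ge fun hle => hst.not_ge ?_
  rw [← hs.rootsInDisc_radius, ← ht.rootsInDisc_radius]
  exact rootsInDisc_antitone hle

theorem newton_polygon_of_translate_from_clusters_general (hf : f.Splits) {n : ℕ}
    {s : Fin (n + 1) → Multiset L} (hmono : StrictMono s)
    (hs : Set.range s = {t | IsCentredCluster v f w t}) :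
    IsNewtonPolygon v (f.comp (X + C w))
      (Fin.cons (f.rootMultiplicity w) fun j => (s j).card)
      (fun j => radius v w (s j)) fun j => gaussValue v f w (radius v w (s j)) := by
  have hcluster (j : Fin (n + 1)) : IsCentredCluster v f w (s j) :=
    hs.subset (Set.mem_range_self j)
  have hanti : StrictAnti fun j => radius v w (s j) := fun i j hij =>
    strictAntiOn_radius (hcluster i) (hcluster j) (hmono hij)
  have hradii : Set.range (fun j => radius v w (s j)) = rootRadii v f w := by
    rw [← image_radius_setOf_isCentredCluster, ← hs, ← Set.range_comp']
  have hcard (j : Fin (n + 1)) :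
      (s j).card = f.roots.countP fun r => radius v w (s j) ≤ v (r - w) := by
    rw [Multiset.countP_eq_card_filter]
    exact congrArg _ (hcluster j).rootsInDisc_radius.symm
  simpa only [hcard] using isNewtonPolygon_of_radii hanti hradii hf

end Cluster
end Splits

section Setup

variable (S : Setup K Kbar)

/-- The valuation of `S`, as a bundled Mathlib valuation. -/
def Setup.addValuation : AddValuation Kbar (WithTop ℚ) :=
  AddValuation.of S.v ((S.v_top_iff 0).mpr rfl) S.v_one S.v_add S.v_mul

variable {S} {f : K[X]} {w : K}

lemma val_rootFinset (hsep : f.Separable) :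
    (rootFinset f).val = (f.map (algebraMap K Kbar)).roots :=
  (nodup_roots hsep.map).dedup

lemma rootMultiplicity_map_eq_ite (hsep : f.Separable) :
    (f.map (algebraMap K Kbar)).rootMultiplicity (algebraMap K Kbar w) =
      if f.eval w = 0 then 1 else 0 := by
  have hroot : algebraMap K Kbar w ∈ (f.map (algebraMap K Kbar)).roots ↔ f.eval w = 0 := by
    rw [mem_roots hsep.map.ne_zero, IsRoot.def, eval_map_apply, map_eq_zero]
  rw [← count_roots, Multiset.count_eq_of_nodup (nodup_roots hsep.map)]
  exact if_congr hroot rfl rfl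

lemma gaussValue_map (hsep : f.Separable) (ρ : WithTop ℚ) :
    gaussValue S.addValuation (f.map (algebraMap K Kbar)) (algebraMap K Kbar w) ρ =
      S.vK f.leadingCoeff + ∑ r ∈ rootFinset f, min (S.v (r - algebraMap K Kbar w)) ρ := by
  rw [gaussValue, leadingCoeff_map, ← val_rootFinset hsep]
  rfl

lemma radius_val (s : Finset Kbar) :
    radius S.addValuation (algebraMap K Kbar w) s.val = dminK S s w :=
  rfl

theorem isCentredCluster_iff_exists_val_eq (hsep : f.Separable) {t : Multiset Kbar} :
    IsCentredCluster S.addValuation (f.map (algebraMap K Kbar)) (algebraMap K Kbar w) t ↔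
      ∃ s : Finset Kbar, (IsClusterCentredAt S f w s ∧ s ≠ {algebraMap K Kbar w}) ∧ s.val = t := by
  have hdisc (δ : WithTop ℚ) :
      rootsInDisc S.addValuation (f.map (algebraMap K Kbar)) (algebraMap K Kbar w) δ =
        ((rootFinset f).filter fun r => δ ≤ S.v (r - algebraMap K Kbar w)).val := by
    rw [rootsInDisc, ← val_rootFinset hsep]
    rfl
  constructor
  · rintro ⟨⟨r, hr, hrw⟩, δ, rfl⟩
    rw [hdisc, Finset.mem_val] at hr
    obtain rfl | hδ := eq_or_ne δ ⊤
    · refine absurd ?_ hrw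
      rw [← sub_eq_zero, ← S.v_top_iff, ← top_le_iff]
      exact (Finset.mem_filter.mp hr).2
    · lift δ to ℚ using hδ
      refine ⟨_, ⟨⟨⟨r, hr⟩, δ, rfl⟩, ?_⟩, (hdisc δ).symm⟩
      exact fun h => hrw (Finset.mem_singleton.mp (h ▸ hr))
  · rintro ⟨_, ⟨⟨hne, δ, rfl⟩, hs⟩, rfl⟩
    refine ⟨?_, δ, (hdisc δ).symm⟩
    by_contra! hall
    exact hs (Finset.eq_singleton_iff_nonempty_unique_mem.mpr ⟨hne, hall⟩)

lemma add_nsmul_coe_eq_coe_iff {x : WithTop ℚ} {m : ℕ} {ρ e : ℚ} :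
    x + m • (ρ : WithTop ℚ) = e ↔ x = ((e - m * ρ : ℚ) : WithTop ℚ) := by
  rw [← WithTop.coe_nsmul, nsmul_eq_mul]
  induction x with
  | top => rw [top_add]; exact iff_of_false WithTop.top_ne_coe WithTop.top_ne_coe
  | coe x => rw [← WithTop.coe_add, WithTop.coe_inj, WithTop.coe_inj, eq_sub_iff_add_eq]

lemma natTrailingDegree_map_algebraMap (g : K[X]) :
    (g.map (algebraMap K Kbar)).natTrailingDegree = g.natTrailingDegree := by
  rw [natTrailingDegree, natTrailingDegree, trailingDegree, trailingDegree,
    support_map_of_injective _ (algebraMap K Kbar).injective]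

namespace IsNewtonPolygon

section Slope

variable {g : K[X]} {n : ℕ} {i : Fin (n + 1) → ℕ} {ρ e : Fin n → ℚ}
  (h : IsNewtonPolygon S.addValuation (g.map (algebraMap K Kbar)) i (fun j => (ρ j : WithTop ℚ))
    fun j => (e j : WithTop ℚ))

include h

lemma vK_coeff_castSucc (j : Fin n) :
    S.vK (g.coeff (i j.castSucc)) = ((e j - i j.castSucc * ρ j : ℚ) : WithTop ℚ) := by
  have hleft := (h.isEdge j).left
  rwa [coeff_map, add_nsmul_coe_eq_coe_iff] at hleft

lemma vK_coeff_succ (j : Fin n) :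
    S.vK (g.coeff (i j.succ)) = ((e j - i j.succ * ρ j : ℚ) : WithTop ℚ) := by
  have hright := (h.isEdge j).right
  rwa [coeff_map, add_nsmul_coe_eq_coe_iff] at hright

lemma le_add_mul {m : ℕ} {q : ℚ} (hq : S.vK (g.coeff m) = q) (j : Fin n) :
    e j ≤ q + m * ρ j := by
  have hle : (e j : WithTop ℚ) ≤ S.vK (g.coeff m) + m • (ρ j : WithTop ℚ) := by
    have hle := (h.isEdge j).le m
    rwa [coeff_map] at hle
  rwa [hq, ← WithTop.coe_nsmul, nsmul_eq_mul, ← WithTop.coe_add, WithTop.coe_le_coe] at hle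

variable {c : Fin (n + 1) → ℚ} (hc : ∀ j, S.vK (g.coeff (i j)) = c j)

include hc

lemma vertex_castSucc (j : Fin n) : c j.castSucc = e j - i j.castSucc * ρ j :=
  WithTop.coe_injective ((hc _).symm.trans (h.vK_coeff_castSucc j))

lemma vertex_succ (j : Fin n) : c j.succ = e j - i j.succ * ρ j :=
  WithTop.coe_injective ((hc _).symm.trans (h.vK_coeff_succ j))

theorem slope_eq (j : Fin n) : NPslope i c j = -ρ j := by
  have hne : (i j.succ : ℚ) - i j.castSucc ≠ 0 :=
    sub_ne_zero.mpr (Nat.cast_injective.ne (h.strictMono j.castSucc_lt_succ).ne')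
  rw [NPslope, h.vertex_castSucc hc, h.vertex_succ hc, div_eq_iff hne]
  ring

theorem isNPVertices : IsNPVertices S g n i c where
  mono := h.strictMono
  first := h.first.trans (natTrailingDegree_map_algebraMap g)
  last := h.last.trans (natDegree_map _)
  vert := hc
  slope_mono j k hjk := by
    rw [h.slope_eq hc, h.slope_eq hc]
    exact neg_lt_neg (WithTop.coe_lt_coe.mp (h.strictAnti hjk))
  support j m q hq := by
    have hpos : (0 : ℚ) ≤ i j.succ - i j.castSucc :=
      sub_nonneg.mpr (Nat.cast_le.mpr (h.strictMono j.castSucc_lt_succ).le)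
    rw [h.vertex_castSucc hc, h.vertex_succ hc]
    linear_combination mul_le_mul_of_nonneg_right (h.le_add_mul hq j) hpos

end Slope

theorem vK_coeff_vertIdx {g : K[X]} {n a : ℕ} {s : Fin (n + 1) → Finset Kbar}
    {ρ e : Fin (n + 1) → ℚ}
    (h : IsNewtonPolygon S.addValuation (g.map (algebraMap K Kbar)) (vertIdx a s)
      (fun j => (ρ j : WithTop ℚ)) fun j => (e j : WithTop ℚ)) (j : Fin (n + 2)) :
    S.vK (g.coeff (vertIdx a s j)) = vertVal (e 0 - a * ρ 0) s ρ e j := by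
  induction j using Fin.cases with
  | zero => exact h.vK_coeff_castSucc 0
  | succ j => exact h.vK_coeff_succ j

end IsNewtonPolygon

theorem isNewtonPolygon_map_comp_of_clusters (hsep : f.Separable) {n : ℕ}
    {s : Fin (n + 1) → Finset Kbar} (hmono : StrictMono s)
    (hs : ∀ t, (IsClusterCentredAt S f w t ∧ t ≠ {algebraMap K Kbar w}) ↔ ∃ j, s j = t)
    {ρ ε : Fin (n + 1) → ℚ} (hρ : ∀ j, dminK S (s j) w = ρ j)
    (hε : ∀ j, (ε j : WithTop ℚ) =
      S.vK f.leadingCoeff + ∑ r ∈ rootFinset f, min (S.v (r - algebraMap K Kbar w)) (ρ j)) :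
    IsNewtonPolygon S.addValuation ((f.comp (X + C w)).map (algebraMap K Kbar))
      (vertIdx (if f.eval w = 0 then 1 else 0) s) (fun j => (ρ j : WithTop ℚ))
      fun j => (ε j : WithTop ℚ) := by
  have := S.algClosed
  have hclusters : Set.range (fun j => (s j).val) = {t | IsCentredCluster S.addValuation
      (f.map (algebraMap K Kbar)) (algebraMap K Kbar w) t} := by
    ext t
    simp only [isCentredCluster_iff_exists_val_eq hsep, hs, Set.mem_range, Set.mem_ofPred_eq,
      exists_exists_eq_and]
  have h := newton_polygon_of_translate_from_clusters_general
    (IsAlgClosed.splits (f.map (algebraMap K Kbar)))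
    (fun _ _ hij => Finset.val_lt_iff.mpr (hmono hij)) hclusters
  simp only [radius_val, hρ, gaussValue_map hsep, ← hε, rootMultiplicity_map_eq_ite hsep] at h
  rw [Polynomial.map_comp, Polynomial.map_add, map_X, map_C]
  exact h

end Setup

/-- **The Newton polygon of `f(x+w)` from the clusters centred at `w`.** Let `w ∈ K` with
`R ≠ {w}`, and let `s_1 ⊊ … ⊊ s_{n+1} = R` be the clusters in `Σ̊_f^w`, with radii `ρ_j`
and invariants `ε_j`. Then the vertices of `NP(f(x+w))` are exactly `Q_0, …, Q_{n+1}` with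
`Q_j = (|s_j|, ε_j − |s_j|·ρ_j)` for `j ≥ 1` (in particular `Q_{n+1} = (deg f, v(c_f))`),
`Q_0 = (0, ε_1)` if `f(w) ≠ 0` and `Q_0 = (1, ε_1 − ρ_1)` if `f(w) = 0`, and the `j`-th edge
has slope `−ρ_j`. -/
theorem newton_polygon_of_translate_from_clusters
    (S : Setup K Kbar) (f : K[X]) (hsep : f.Separable) (hdeg : 1 ≤ f.natDegree)
    (w : K) (hRw : rootFinset f ≠ ({algebraMap K Kbar w} : Finset Kbar))
    (n : ℕ) (s : Fin (n + 1) → Finset Kbar)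
    (hmono : StrictMono s)
    (hmem : ∀ j, IsClusterCentredAt S f w (s j) ∧ s j ≠ ({algebraMap K Kbar w} : Finset Kbar))
    (hlastR : s (Fin.last n) = rootFinset f)
    (hexh : ∀ t : Finset Kbar, IsClusterCentredAt S f w t →
      t ≠ ({algebraMap K Kbar w} : Finset Kbar) → ∃ j, t = s j)
    (ρ ε : Fin (n + 1) → ℚ)
    (hρ : ∀ j, dminK S (s j) w = ((ρ j : ℚ) : WithTop ℚ))
    (hε : ∀ j, ((ε j : ℚ) : WithTop ℚ) =
      S.vK f.leadingCoeff +
        ∑ r ∈ rootFinset f, min (S.v (r - algebraMap K Kbar w)) ((ρ j : ℚ) : WithTop ℚ)) :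
    IsNPVertices S (f.comp (Polynomial.X + Polynomial.C w)) (n + 1)
      (vertIdx (if f.eval w = 0 then 1 else 0) s)
      (vertVal (if f.eval w = 0 then ε 0 - ρ 0 else ε 0) s ρ ε) ∧
    (∀ j : Fin (n + 1),
      NPslope (vertIdx (if f.eval w = 0 then 1 else 0) s)
        (vertVal (if f.eval w = 0 then ε 0 - ρ 0 else ε 0) s ρ ε) j = -(ρ j)) ∧
    (s (Fin.last n)).card = f.natDegree ∧
    ((ε (Fin.last n) - ((s (Fin.last n)).card : ℚ) * ρ (Fin.last n) : ℚ) : WithTop ℚ) =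
      S.vK f.leadingCoeff := by
  have hNP := isNewtonPolygon_map_comp_of_clusters hsep hmono
    (fun t => ⟨fun ht => (hexh t ht.1 ht.2).imp fun _ => Eq.symm, fun ⟨j, hj⟩ => hj ▸ hmem j⟩) hρ hε
  have hfirst : (if f.eval w = 0 then ε 0 - ρ 0 else ε 0) =
      ε 0 - (if f.eval w = 0 then 1 else 0 : ℕ) * ρ 0 := by
    split_ifs <;> simp
  have hvert := hNP.vK_coeff_vertIdx
  rw [← hfirst] at hvert
  have hvertices := hNP.isNPVertices hvert
  have hlast : (s (Fin.last n)).card = (f.comp (X + C w)).natDegree := hvertices.last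
  have hdegree : (f.comp (X + C w)).natDegree = f.natDegree := by
    rw [natDegree_comp, natDegree_X_add_C, mul_one]
  refine ⟨hvertices, hNP.slope_eq hvert, hlast.trans hdegree, ?_⟩
  have hlead := hNP.vK_coeff_succ (Fin.last n)
  refine hlead.symm.trans (congrArg S.vK ?_)
  rw [Fin.succ_last, hvertices.last, coeff_natDegree, leadingCoeff_comp (by simp),
    leadingCoeff_X_add_C, one_pow, mul_one]

end ClusterPicture
end

section
/- Let F/K be a finite Galois extension, where K is a complete discretely valued field, and let O_K ⊆ O_F be the rings of integers of K and F. Let M be a flat O_K-module and let M_F = M ⊗_{O_K} O_F, on which Gal(F/K) acts O_K-linearly through the second factor. Then the natural map M → M_F, m ↦ m ⊗ 1, is injective and induces an isomorphism of O_K-modules M ≅ (M_F)^{Gal(F/K)} = {m ∈ M_F : σ(m) = m for every σ ∈ Gal(F/K)}. -/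
/-!
Taking invariants under finitely many linear maps `σ` is taking the kernel of `(σ - 1)_σ`, a linear
map into a finite product. Tensoring with a flat module preserves kernels and finite products, so
`(M ⊗ B)^G = M ⊗ B^G`. For infinitely many `σ` with finite orbits, an element of `M ⊗ B` comes from
`M ⊗ N` with `N ⊆ B` finitely generated, and only finitely many `σ` are distinct on `N`. For the
Galois group, `O_F^G = O_F ∩ K = O_K` because `O_K` is integrally closed.
-/

open scoped TensorProduct

section FlatKernels

variable {R M N P ι : Type*} [CommRing R] [AddCommGroup M] [Module R M]
  [AddCommGroup N] [Module R N] [AddCommGroup P] [Module R P]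
  {Q : ι → Type*} [∀ i, AddCommGroup (Q i)] [∀ i, Module R (Q i)]

theorem lTensor_pi_eq_zero_iff [Finite ι] (f : ∀ i, N →ₗ[R] Q i) (x : M ⊗[R] N) :
    LinearMap.lTensor M (LinearMap.pi f) x = 0 ↔ ∀ i, LinearMap.lTensor M (f i) x = 0 := by
  classical
  have := Fintype.ofFinite ι
  have piRight_apply (i : ι) :
      TensorProduct.piRight R R M Q (LinearMap.lTensor M (LinearMap.pi f) x) i =
        LinearMap.lTensor M (f i) x := by
    induction x with
    | zero => simp
    | tmul m n => simp
    | add x y hx hy => simp only [map_add, Pi.add_apply, hx, hy]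
  rw [← (TensorProduct.piRight R R M Q).map_eq_zero_iff, funext_iff]
  simp only [piRight_apply, Pi.zero_apply]

theorem range_lTensor_iInf_ker_of_finite [Module.Flat R M] [Finite ι] (f : ∀ i, N →ₗ[R] Q i) :
    LinearMap.range (LinearMap.lTensor M (⨅ i, LinearMap.ker (f i)).subtype) =
      ⨅ i, LinearMap.ker (LinearMap.lTensor M (f i)) := by
  ext x
  rw [← LinearMap.ker_pi, ← (LinearMap.exact_iff.mp <| Module.Flat.lTensor_exact M <|
    LinearMap.exact_subtype_ker_map (LinearMap.pi f)), LinearMap.mem_ker, lTensor_pi_eq_zero_iff]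
  simp only [Submodule.mem_iInf, LinearMap.mem_ker]

theorem finite_range_linearMap_of_finite_range_apply [Module.Finite R N] {f : ι → N →ₗ[R] P}
    (hf : ∀ n, (Set.range fun i ↦ f i n).Finite) : (Set.range f).Finite := by
  obtain ⟨k, s, hs⟩ := Module.Finite.exists_fin (R := R) (M := N)
  have evaluation_injective : Function.Injective fun (g : N →ₗ[R] P) j ↦ g (s j) := fun g h hgh ↦
    LinearMap.ext_on_range hs (congrFun hgh)
  refine .of_finite_image ((Set.Finite.pi' fun j ↦ hf (s j)).subset ?_)
    evaluation_injective.injOn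
  rintro _ ⟨_, ⟨i, rfl⟩, rfl⟩ j
  exact ⟨i, rfl⟩

theorem range_lTensor_iInf_ker [Module.Flat R M] {f : ι → N →ₗ[R] P}
    (hf : ∀ n, (Set.range fun i ↦ f i n).Finite) :
    LinearMap.range (LinearMap.lTensor M (⨅ i, LinearMap.ker (f i)).subtype) =
      ⨅ i, LinearMap.ker (LinearMap.lTensor M (f i)) := by
  apply le_antisymm
  · refine le_iInf fun i ↦ LinearMap.range_le_ker_iff.mpr ?_
    rw [← LinearMap.lTensor_comp, LinearMap.le_ker_iff_comp_subtype_eq_zero.mp (iInf_le _ i),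
      LinearMap.lTensor_zero]
  · intro x hx
    obtain ⟨N', _, hN'⟩ :=
      TensorProduct.exists_finite_submodule_right_of_setFinite {x} (Set.finite_singleton x)
    obtain ⟨y, rfl⟩ := hN' rfl
    let g (i : ι) : N' →ₗ[R] P := f i ∘ₗ N'.subtype
    have : Finite (Set.range g) := finite_range_linearMap_of_finite_range_apply fun n ↦ hf n
    have hy : y ∈ ⨅ h : Set.range g, LinearMap.ker (LinearMap.lTensor M h.1) := by
      simpa [g, LinearMap.lTensor_comp] using hx
    rw [← range_lTensor_iInf_ker_of_finite] at hy
    obtain ⟨z, rfl⟩ := hy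
    have subtype_mem : ∀ n ∈ ⨅ h : Set.range g, LinearMap.ker h.1,
        N'.subtype n ∈ ⨅ i, LinearMap.ker (f i) := by
      simp [g]
    exact ⟨LinearMap.lTensor M (N'.subtype.restrict subtype_mem) z, by
      simp only [← LinearMap.comp_apply, ← LinearMap.lTensor_comp, LinearMap.subtype_comp_restrict,
        LinearMap.domRestrict]⟩

end FlatKernels

section FlatInvariants

variable {A B M ι : Type*} [CommRing A] [Ring B] [Algebra A B]
  [AddCommGroup M] [Module A M]

theorem mem_range_lTensor_algebraLinearMap_iff {x : M ⊗[A] B} :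
    x ∈ LinearMap.range (LinearMap.lTensor M (Algebra.linearMap A B)) ↔
      ∃ m : M, m ⊗ₜ[A] (1 : B) = x := by
  simp [LinearMap.mem_range, (TensorProduct.rid A M).symm.surjective.exists]

theorem tmul_one_injective [FaithfulSMul A B] [Module.Flat A M] :
    Function.Injective fun m : M ↦ (m ⊗ₜ[A] (1 : B) : M ⊗[A] B) :=
  (TensorProduct.comm A B M).injective.comp (Module.Flat.tensorProduct_mk_injective A M B)

theorem forall_lTensor_apply_eq_self_iff [Module.Flat A M] {f : ι → B →ₗ[A] B}
    (hf : ∀ b, (Set.range fun i ↦ f i b).Finite)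
    (hfix : ∀ b, (∀ i, f i b = b) ↔ b ∈ Set.range (algebraMap A B)) {x : M ⊗[A] B} :
    (∀ i, LinearMap.lTensor M (f i) x = x) ↔ ∃ m : M, m ⊗ₜ[A] (1 : B) = x := by
  have finite_range_sub (b : B) : (Set.range fun i ↦ (f i - LinearMap.id : B →ₗ[A] B) b).Finite :=
    ((hf b).image (· - b)).subset (by rintro _ ⟨i, rfl⟩; exact ⟨_, ⟨i, rfl⟩, rfl⟩)
  have iInf_ker_sub : ⨅ i, LinearMap.ker (f i - LinearMap.id) =
      LinearMap.range (Algebra.linearMap A B) := by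
    ext b
    simpa [sub_eq_zero] using hfix b
  calc
    (∀ i, LinearMap.lTensor M (f i) x = x) ↔
        x ∈ ⨅ i, LinearMap.ker (LinearMap.lTensor M (f i - LinearMap.id)) := by
      simp [LinearMap.lTensor_sub, sub_eq_zero]
    _ ↔ x ∈ LinearMap.range (LinearMap.lTensor M (Algebra.linearMap A B)) := by
      rw [← range_lTensor_iInf_ker finite_range_sub, iInf_ker_sub, ← LinearMap.lTensor_range]
    _ ↔ ∃ m : M, m ⊗ₜ[A] (1 : B) = x := mem_range_lTensor_algebraLinearMap_iff

end FlatInvariants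

theorem finite_range_algHom_apply {K F E : Type*} [Field K] [Ring F] [Algebra K F]
    [CommRing E] [IsDomain E] [Algebra K E] {x : F} (hx : IsIntegral K x) :
    (Set.range fun φ : F →ₐ[K] E ↦ φ x).Finite := by
  refine ((minpoly K x).rootSet_finite E).subset ?_
  rintro _ ⟨φ, rfl⟩
  exact Polynomial.mem_rootSet.mpr ⟨minpoly.ne_zero hx, minpoly.aeval_algHom K φ x⟩

section GaloisRestriction

variable {A K F B : Type*} [CommRing A] [Field K] [Algebra A K] [IsFractionRing A K]
  [Field F] [Algebra K F] [Algebra A F] [IsScalarTower A K F]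
  [CommRing B] [Algebra A B] [Algebra B F] [IsScalarTower A B F] [IsIntegralClosure B A F]

theorem finite_range_galRestrict_apply [Algebra.IsAlgebraic K F] (b : B) :
    (Set.range fun σ : F ≃ₐ[K] F ↦ galRestrict A K F B σ b).Finite := by
  have isIntegral_b : IsIntegral K (algebraMap B F b) := Algebra.IsIntegral.isIntegral _
  refine .of_finite_image ((finite_range_algHom_apply (E := F) isIntegral_b).subset ?_)
    (IsIntegralClosure.algebraMap_injective B A F).injOn
  rintro _ ⟨_, ⟨σ, rfl⟩, rfl⟩
  exact ⟨σ.toAlgHom, (algebraMap_galRestrict_apply A σ b).symm⟩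

theorem forall_galRestrict_apply_eq_self_iff [IsIntegrallyClosed A] [IsGalois K F] {b : B} :
    (∀ σ : F ≃ₐ[K] F, galRestrict A K F B σ b = b) ↔ b ∈ Set.range (algebraMap A B) := by
  constructor
  · intro hb
    have hfix (σ : F ≃ₐ[K] F) : σ (algebraMap B F b) = algebraMap B F b := by
      rw [← algebraMap_galRestrict_apply A σ b, hb]
    obtain ⟨k, hk⟩ := (InfiniteGalois.mem_range_algebraMap_iff_fixed _).mpr hfix
    have isIntegral_k : IsIntegral A k := by
      rw [← isIntegral_algebraMap_iff (algebraMap K F).injective, hk]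
      exact IsIntegralClosure.isIntegral_iff (A := B).mpr ⟨b, rfl⟩
    obtain ⟨a, rfl⟩ := IsIntegrallyClosed.isIntegral_iff.mp isIntegral_k
    refine ⟨a, IsIntegralClosure.algebraMap_injective B A F ?_⟩
    rw [← hk, ← IsScalarTower.algebraMap_apply A B F, ← IsScalarTower.algebraMap_apply A K F]
  · rintro ⟨a, rfl⟩ σ
    exact (galRestrict A K F B σ).commutes a

end GaloisRestriction

theorem isIntegrallyClosed_of_addValuation {K Γ A : Type*} [Field K]
    [LinearOrderedAddCommGroupWithTop Γ] [CommRing A] [Algebra A K] [FaithfulSMul A K]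
    (v : AddValuation K Γ) (hA : ∀ x : K, 0 ≤ v x ↔ ∃ a : A, algebraMap A K a = x) :
    IsIntegrallyClosed A :=
  Valuation.Integers.isIntegrallyClosed (v := AddValuation.toValuation v)
    { hom_inj := FaithfulSMul.algebraMap_injective A K
      map_le_one := fun a ↦ (hA _).mpr ⟨a, rfl⟩
      exists_of_le_one := fun x hx ↦ (hA x).mp hx }

theorem flat_module_galois_fixed_points_general
    (K : Type*) [Field K] (F : Type*) [Field F] [Algebra K F] [IsGalois K F]
    (A : Type*) [CommRing A] [IsIntegrallyClosed A] [Algebra A K] [IsFractionRing A K]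
    (B : Type*) [CommRing B] [Algebra A B] [Algebra B F] [Algebra A F]
    [IsScalarTower A B F] [IsScalarTower A K F] [IsIntegralClosure B A F]
    (M : Type*) [AddCommGroup M] [Module A M] [Module.Flat A M] :
    Function.Injective (fun m : M => (m ⊗ₜ[A] (1 : B) : M ⊗[A] B)) ∧
    (Set.range fun m : M => (m ⊗ₜ[A] (1 : B) : M ⊗[A] B)) =
      {x : M ⊗[A] B | ∀ σ : F ≃ₐ[K] F,
        LinearMap.lTensor M ((galRestrict A K F B σ).toAlgHom.toLinearMap) x = x} := by
  have : FaithfulSMul A F := .trans A K F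
  have : FaithfulSMul A B := .tower_bot A B F
  refine ⟨tmul_one_injective, Set.ext fun x ↦ ?_⟩
  exact (forall_lTensor_apply_eq_self_iff finite_range_galRestrict_apply
    fun _ ↦ forall_galRestrict_apply_eq_self_iff).symm

/-- **Galois fixed points of flat modules under base extension.** Let `F/K` be a finite
Galois extension, where `K` is a complete discretely valued field (with valuation `v`), and
let `O_K ⊆ O_F` be the rings of integers (`A` with fraction field `K` consisting of the
`v`-integral elements, and `B` the integral closure of `A` in `F`). Let `M` be a flat
`O_K`-module and `M_F = M ⊗_{O_K} O_F`, with `Gal(F/K)` acting through the second factor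
(via `galRestrict`). Then the natural map `M → M_F`, `m ↦ m ⊗ 1`, is injective with image
exactly the `Gal(F/K)`-fixed points, i.e. it induces `M ≅ (M_F)^{Gal(F/K)}`. -/
theorem flat_module_galois_fixed_points
    (K : Type*) [Field K] (v : K → WithTop ℤ)
    (hv_top : ∀ x : K, v x = ⊤ ↔ x = 0)
    (hv_one : v 1 = 0)
    (hv_mul : ∀ x y : K, v (x * y) = v x + v y)
    (hv_add : ∀ x y : K, min (v x) (v y) ≤ v (x + y))
    (hv_surj : ∀ n : ℤ, ∃ x : K, v x = (n : WithTop ℤ))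
    (hcomplete : ∀ a : ℕ → K,
      (∀ q : ℤ, ∃ N : ℕ, ∀ m, N ≤ m → ∀ n, N ≤ n → ((q : ℤ) : WithTop ℤ) ≤ v (a m - a n)) →
      ∃ b : K, ∀ q : ℤ, ∃ N : ℕ, ∀ n, N ≤ n → ((q : ℤ) : WithTop ℤ) ≤ v (a n - b))
    (F : Type*) [Field F] [Algebra K F] [FiniteDimensional K F] [IsGalois K F]
    (A : Type*) [CommRing A] [Algebra A K] [IsFractionRing A K]
    (hA : ∀ x : K, ((0 : WithTop ℤ) ≤ v x ↔ ∃ a : A, algebraMap A K a = x))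
    (B : Type*) [CommRing B] [Algebra A B] [Algebra B F] [Algebra A F]
    [IsScalarTower A B F] [IsScalarTower A K F] [IsIntegralClosure B A F]
    (M : Type*) [AddCommGroup M] [Module A M] [Module.Flat A M] :
    Function.Injective (fun m : M => (m ⊗ₜ[A] (1 : B) : M ⊗[A] B)) ∧
    (Set.range fun m : M => (m ⊗ₜ[A] (1 : B) : M ⊗[A] B)) =
      {x : M ⊗[A] B | ∀ σ : F ≃ₐ[K] F,
        LinearMap.lTensor M ((galRestrict A K F B σ).toAlgHom.toLinearMap) x = x} := by
  have := isIntegrallyClosed_of_addValuation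
    (AddValuation.of v ((hv_top 0).mpr rfl) hv_one hv_add hv_mul) hA
  exact flat_module_galois_fixed_points_general K F A B M
end
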